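/- Let μ be a compactly supported probability measure on ℝ^d and let y > 0. Then (1/2) ∑_{i=1}^d ‖ ∂/∂x_i (μ * n_y) ‖₁² ≤ D⁺_y H(μ * n_y), where D⁺_y denotes the right-hand derivative of the function t ↦ H(μ * n_t) at t = y (which exists), and ∂/∂x_i (μ * n_y) denotes the i-th partial derivative of the density of μ * n_y. -/

import Mathlib

open MeasureTheory Real

/-- Density of the centered Gaussian on `ℝ^d` with covariance matrix `y • I`. -/
noncomputable def gaussD (d : ℕ) (y : ℝ) (x : EuclideanSpace ℝ (Fin d)) : ℝ :=
  (2 * Real.pi * y) ^ (-(d : ℝ) / 2) * Real.exp (-‖x‖ ^ 2 / (2 * y))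

/-- The density of `μ * n_y`. -/
noncomputable def convG (d : ℕ) (μ : Measure (EuclideanSpace ℝ (Fin d))) (y : ℝ)
    (x : EuclideanSpace ℝ (Fin d)) : ℝ :=
  ∫ z, gaussD d y (x - z) ∂μ

/-- The differential entropy `H(μ * n_y) = ∫ -f log f` where `f` is the density of `μ * n_y`. -/
noncomputable def entG (d : ℕ) (μ : Measure (EuclideanSpace ℝ (Fin d))) (y : ℝ) : ℝ :=
  ∫ x, Real.negMulLog (convG d μ y x)

/-!
Write `f = μ * n_y`. The Gaussian density solves the heat equation `∂_t n_t = ½ Δ n_t`, hence so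
does `μ * n_t`, and differentiating `H(μ * n_t)` under the integral sign gives at `t = y` the
derivative `½ ∫ (-log f - 1) Δf`. Integrating by parts in each coordinate turns this into de
Bruijn's identity: the derivative of the entropy is half the Fisher information `∑ᵢ ∫ (∂ᵢf)² / f`.
Since `f` is a probability density, Cauchy–Schwarz bounds `(∫ |∂ᵢf|)²` by `∫ (∂ᵢf)² / f`.

Both limit operations rest on two bounds that are uniform for `t` near `y`: `|log (μ * n_t)|` is at
most a multiple of `1 + ‖x‖²`, because `μ * n_t` is bounded above and decays no faster than a
Gaussian, and the derivatives of `μ * n_t` are at most a multiple of `μ * n_{4y}`, whose second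
moment is finite as soon as that of `μ` is.
-/

open Asymptotics Set

section General

theorem one_add_norm_sq_le_two_mul {E : Type*} [SeminormedAddCommGroup E] (x z : E) :
    1 + ‖x‖ ^ 2 ≤ 2 * ((1 + ‖z‖ ^ 2) * (1 + ‖x - z‖ ^ 2)) := by
  have htri : ‖x‖ ≤ ‖x - z‖ + ‖z‖ := by simpa using norm_add_le (x - z) z
  nlinarith [norm_nonneg x, sq_nonneg (‖x - z‖ - ‖z‖), sq_nonneg (‖x - z‖ * ‖z‖)]

theorem one_add_mul_exp_neg_div_le {a s : ℝ} (ha : 0 < a) (hs : 0 ≤ s) :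
    (1 + s) * exp (-(s / a)) ≤ 1 + a := by
  have hle : s ≤ a * exp (s / a) := by
    rw [← div_le_iff₀' ha]
    linarith [add_one_le_exp (s / a)]
  rw [exp_neg, ← div_eq_mul_inv, div_le_iff₀ (exp_pos _)]
  linarith [one_le_exp (div_nonneg hs ha.le)]

theorem abs_log_le_of_mul_exp_le {a b c C u : ℝ} (ha : 0 < a) (hb : 0 ≤ b) (hc : 0 ≤ c)
    (hlower : a * exp (-(b * c)) ≤ u) (hupper : u ≤ C) :
    |log u| ≤ (|log a| + |log C| + b) * (1 + c) := by
  have hlog_lower : log a - b * c ≤ log u := by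
    have := log_le_log (by positivity) hlower
    rwa [log_mul ha.ne' (exp_pos _).ne', log_exp, ← sub_eq_add_neg] at this
  have hlog_upper : log u ≤ log C := log_le_log (lt_of_lt_of_le (by positivity) hlower) hupper
  have hlog : |log u| ≤ |log a| + |log C| + b * c :=
    abs_le.2 ⟨by linarith [neg_abs_le (log a), abs_nonneg (log C)],
      by linarith [le_abs_self (log C), abs_nonneg (log a), mul_nonneg hb hc]⟩
  linarith [mul_nonneg (abs_nonneg (log a)) hc, mul_nonneg (abs_nonneg (log C)) hc]

theorem sq_integral_abs_le_integral_sq_div_mul_integral {α : Type*} [MeasurableSpace α]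
    {μ : Measure α} {u v : α → ℝ} (hv_pos : ∀ x, 0 < v x) (hu : Integrable u μ)
    (hv : Integrable v μ) (huv : Integrable (fun x ↦ u x ^ 2 / v x) μ) :
    (∫ x, |u x| ∂μ) ^ 2 ≤ (∫ x, u x ^ 2 / v x ∂μ) * ∫ x, v x ∂μ := by
  have hquad (c : ℝ) : 0 ≤ (∫ x, v x ∂μ) * (c * c) + (-2 * ∫ x, |u x| ∂μ) * c +
      ∫ x, u x ^ 2 / v x ∂μ := by
    have hpoint (x : α) : 0 ≤ c ^ 2 * v x + -2 * c * |u x| + u x ^ 2 / v x := by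
      have hsq : c ^ 2 * v x + -2 * c * |u x| + u x ^ 2 / v x = (c * v x - |u x|) ^ 2 / v x := by
        have := (hv_pos x).ne'
        field_simp
        rw [← sq_abs (u x)]
        ring
      rw [hsq]
      exact div_nonneg (sq_nonneg _) (hv_pos x).le
    have hint : Integrable (fun x ↦ c ^ 2 * v x + -2 * c * |u x|) μ :=
      (hv.const_mul _).add (hu.abs.const_mul _)
    have hexpand : ∫ x, c ^ 2 * v x + -2 * c * |u x| + u x ^ 2 / v x ∂μ =
        c ^ 2 * ∫ x, v x ∂μ + -2 * c * ∫ x, |u x| ∂μ + ∫ x, u x ^ 2 / v x ∂μ := by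
      rw [integral_add hint huv, integral_add (hv.const_mul _) (hu.abs.const_mul _),
        integral_const_mul, integral_const_mul]
    have hnonneg := integral_nonneg_of_ae (μ := μ) (.of_forall hpoint)
    simp only [hexpand] at hnonneg
    linarith
  have hdiscrim := discrim_le_zero hquad
  rw [discrim] at hdiscrim
  linarith

theorem integrable_of_isCompact_of_measure_compl_eq_zero {X F : Type*} [TopologicalSpace X]
    [T2Space X] [MeasurableSpace X] [OpensMeasurableSpace X] [NormedAddCommGroup F]
    {μ : Measure X} [IsFiniteMeasureOnCompacts μ] {f : X → F} (hf : Continuous f) {K : Set X}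
    (hK : IsCompact K) (hμK : μ Kᶜ = 0) : Integrable f μ := by
  have hint : IntegrableOn f K μ := hf.continuousOn.integrableOn_compact hK
  rwa [IntegrableOn, Measure.restrict_eq_self_of_ae_mem hμK] at hint

theorem norm_fderiv_single_le {ι F : Type*} [Fintype ι] [DecidableEq ι] [NormedAddCommGroup F]
    [NormedSpace ℝ F] {f : EuclideanSpace ℝ ι → F} (i : ι) (w : EuclideanSpace ℝ ι) :
    ‖fderiv ℝ f w (EuclideanSpace.single i 1)‖ ≤ ‖fderiv ℝ f w‖ :=
  ContinuousLinearMap.unit_le_opNorm _ _ (by rw [PiLp.norm_single, norm_one])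

theorem integral_neg_log_sub_one_mul_fderiv {E : Type*} [NormedAddCommGroup E] [NormedSpace ℝ E]
    [FiniteDimensional ℝ E] [MeasurableSpace E] [BorelSpace E] {ν : Measure E}
    [ν.IsAddHaarMeasure] {f g : E → ℝ} {v : E} (hf_pos : ∀ x, 0 < f x) (hf : Differentiable ℝ f)
    (hg : Differentiable ℝ g) (hfg : Integrable (fun x ↦ (-log (f x) - 1) * g x) ν)
    (hfg' : Integrable (fun x ↦ (-log (f x) - 1) * fderiv ℝ g x v) ν)
    (hf'g : Integrable (fun x ↦ fderiv ℝ f x v * g x / f x) ν) :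
    ∫ x, (-log (f x) - 1) * fderiv ℝ g x v ∂ν = ∫ x, fderiv ℝ f x v * g x / f x ∂ν := by
  have hL (x : E) : HasFDerivAt (fun x ↦ -log (f x) - 1) (-((f x)⁻¹ • fderiv ℝ f x)) x :=
    ((hf x).hasFDerivAt.log (hf_pos x).ne').neg.sub_const 1
  have hL'g (x : E) : fderiv ℝ (fun x ↦ -log (f x) - 1) x v * g x =
      -(fderiv ℝ f x v * g x / f x) := by
    rw [(hL x).fderiv, neg_apply, smul_apply, smul_eq_mul]
    ring
  rw [integral_mul_fderiv_eq_neg_fderiv_mul_of_integrable _ hfg' hfg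
    (fun x _ ↦ (hL x).differentiableAt) (fun x _ ↦ hg x)]
  · simp only [hL'g, integral_neg, neg_neg]
  · simp only [hL'g]
    exact hf'g.neg

end General

section MeasConv

/-- The convolution `μ * φ` of a measure `μ` with a function `φ`. The density `convG d μ t` is
definitionally `measConv μ (gaussD d t)`. -/
noncomputable def measConv {E F : Type*} [Sub E] [MeasurableSpace E] [NormedAddCommGroup F]
    [NormedSpace ℝ F] (μ : Measure E) (φ : E → F) (x : E) : F :=
  ∫ z, φ (x - z) ∂μ

variable {E F : Type*} [NormedAddCommGroup E] [MeasurableSpace E] [BorelSpace E]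
  [SecondCountableTopology E] [NormedAddCommGroup F] {μ : Measure E} [IsFiniteMeasure μ]
  {φ : E → F} {ψ : E → ℝ}

theorem integrable_comp_const_sub (hφ : Continuous φ) (hφ_bdd : φ =O[⊤] fun _ ↦ (1 : ℝ)) (x : E) :
    Integrable (fun z ↦ φ (x - z)) μ := by
  have hbdd : (fun z ↦ φ (x - z)) =O[⊤] fun _ ↦ (1 : ℝ) := hφ_bdd.comp_tendsto Filter.tendsto_top
  exact hbdd.integrable (hφ.comp (continuous_const.sub continuous_id)).aestronglyMeasurable
    (integrable_const 1)

theorem measConv_pos [NeZero μ] (hψ : Continuous ψ) (hψ_bdd : ψ =O[⊤] fun _ ↦ (1 : ℝ))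
    (hψ_pos : ∀ w, 0 < ψ w) (x : E) : 0 < measConv μ ψ x := by
  have hsupport : Function.support (fun z ↦ ψ (x - z)) = univ :=
    eq_univ_of_forall fun z ↦ (hψ_pos (x - z)).ne'
  rw [measConv, integral_pos_iff_support_of_nonneg (fun z ↦ (hψ_pos (x - z)).le)
    (integrable_comp_const_sub hψ hψ_bdd x), hsupport]
  exact Measure.measure_univ_pos.2 (NeZero.ne μ)

theorem sq_measConv_div_measConv_le [NeZero μ] {φ : E → ℝ} (hφ : Continuous φ)
    (hφ_bdd : φ =O[⊤] fun _ ↦ (1 : ℝ)) (hψ : Continuous ψ) (hψ_bdd : ψ =O[⊤] fun _ ↦ (1 : ℝ))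
    (hψ_pos : ∀ w, 0 < ψ w) (hφψ_bdd : (fun w ↦ φ w ^ 2 / ψ w) =O[⊤] fun _ ↦ (1 : ℝ)) (x : E) :
    measConv μ φ x ^ 2 / measConv μ ψ x ≤ measConv μ (fun w ↦ φ w ^ 2 / ψ w) x := by
  have hφψ : Continuous fun w ↦ φ w ^ 2 / ψ w := (hφ.pow 2).div hψ fun w ↦ (hψ_pos w).ne'
  rw [div_le_iff₀ (measConv_pos hψ hψ_bdd hψ_pos x)]
  calc measConv μ φ x ^ 2 ≤ (∫ z, |φ (x - z)| ∂μ) ^ 2 :=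
        sq_le_sq.2 <| abs_integral_le_integral_abs.trans (le_abs_self _)
    _ ≤ _ := sq_integral_abs_le_integral_sq_div_mul_integral (fun z ↦ hψ_pos (x - z))
        (integrable_comp_const_sub hφ hφ_bdd x) (integrable_comp_const_sub hψ hψ_bdd x)
        (integrable_comp_const_sub hφψ hφψ_bdd x)

variable [NormedSpace ℝ F]

theorem norm_measConv_le (hψ : Continuous ψ) (hψ_bdd : ψ =O[⊤] fun _ ↦ (1 : ℝ)) {C : ℝ}
    (hφψ : ∀ w, ‖φ w‖ ≤ C * ψ w) (x : E) : ‖measConv μ φ x‖ ≤ C * measConv μ ψ x := by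
  rw [measConv, measConv, ← integral_const_mul]
  exact norm_integral_le_of_norm_le ((integrable_comp_const_sub hψ hψ_bdd x).const_mul C)
    (.of_forall fun z ↦ hφψ (x - z))

theorem isBigO_measConv (hψ : Continuous ψ) (hψ_bdd : ψ =O[⊤] fun _ ↦ (1 : ℝ))
    (hψ_nonneg : ∀ w, 0 ≤ ψ w) (hφψ : φ =O[⊤] ψ) : measConv μ φ =O[⊤] measConv μ ψ := by
  obtain ⟨C, hC⟩ := isBigO_top.1 hφψ
  simp only [norm_of_nonneg (hψ_nonneg _)] at hC
  exact isBigO_top.2 ⟨C, fun x ↦ (norm_measConv_le hψ hψ_bdd hC x).trans_eq <| by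
    rw [norm_of_nonneg (show 0 ≤ measConv μ ψ x from integral_nonneg fun z ↦ hψ_nonneg (x - z))]⟩

theorem continuous_measConv (hφ : Continuous φ) (hφ_bdd : φ =O[⊤] fun _ ↦ (1 : ℝ)) :
    Continuous (measConv μ φ) := by
  obtain ⟨C, hC⟩ := isBigO_top.1 hφ_bdd
  exact continuous_of_dominated
    (fun x ↦ (integrable_comp_const_sub hφ hφ_bdd x).aestronglyMeasurable)
    (fun x ↦ .of_forall fun z ↦ hC (x - z)) (integrable_const _)
    (.of_forall fun z ↦ hφ.comp (continuous_id.sub continuous_const))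

theorem hasFDerivAt_measConv [NormedSpace ℝ E] (hφ : ContDiff ℝ 1 φ)
    (hφ_bdd : φ =O[⊤] fun _ ↦ (1 : ℝ)) (hφ'_bdd : fderiv ℝ φ =O[⊤] fun _ ↦ (1 : ℝ)) (x : E) :
    HasFDerivAt (measConv μ φ) (measConv μ (fderiv ℝ φ) x) x := by
  obtain ⟨C, hC⟩ := isBigO_top.1 hφ'_bdd
  have hφ' : Continuous (fderiv ℝ φ) := hφ.continuous_fderiv one_ne_zero
  exact hasFDerivAt_integral_of_dominated_of_fderiv_le Filter.univ_mem
    (.of_forall fun x ↦ (integrable_comp_const_sub hφ.continuous hφ_bdd x).aestronglyMeasurable)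
    (integrable_comp_const_sub hφ.continuous hφ_bdd x)
    (integrable_comp_const_sub hφ' hφ'_bdd x).aestronglyMeasurable
    (.of_forall fun z x _ ↦ hC (x - z)) (integrable_const _)
    (.of_forall fun z x _ ↦ (hasFDerivAt_comp_sub z).2
      (hφ.differentiable one_ne_zero (x - z)).hasFDerivAt)

theorem fderiv_measConv_apply [NormedSpace ℝ E] (hφ : ContDiff ℝ 1 φ)
    (hφ_bdd : φ =O[⊤] fun _ ↦ (1 : ℝ)) (hφ'_bdd : fderiv ℝ φ =O[⊤] fun _ ↦ (1 : ℝ)) (x v : E) :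
    fderiv ℝ (measConv μ φ) x v = measConv μ (fun w ↦ fderiv ℝ φ w v) x := by
  rw [(hasFDerivAt_measConv hφ hφ_bdd hφ'_bdd x).fderiv, measConv, measConv,
    ContinuousLinearMap.integral_apply
      (integrable_comp_const_sub (hφ.continuous_fderiv one_ne_zero) hφ'_bdd x)]

end MeasConv

section MeasConvFubini

variable {E : Type*} [NormedAddCommGroup E] [MeasurableSpace E] [BorelSpace E]
  [SecondCountableTopology E] {μ ν : Measure E} [IsFiniteMeasure μ] [SFinite ν]
  [ν.IsAddRightInvariant]

section

variable {F : Type*} [NormedAddCommGroup F] [NormedSpace ℝ F] {φ : E → F}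

theorem integrable_comp_sub_prod (hφ : Integrable φ ν) :
    Integrable (fun p : E × E ↦ φ (p.1 - p.2)) (ν.prod μ) := by
  simpa only [ContinuousLinearMap.lsmul_apply, one_smul] using
    (integrable_const (1 : ℝ)).convolution_integrand (ContinuousLinearMap.lsmul ℝ ℝ) hφ

theorem integrable_measConv (hφ : Integrable φ ν) : Integrable (measConv μ φ) ν :=
  (integrable_comp_sub_prod hφ).integral_prod_left

theorem integral_measConv [CompleteSpace F] (hφ : Integrable φ ν) :
    ∫ x, measConv μ φ x ∂ν = μ.real univ • ∫ w, φ w ∂ν := by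
  simp only [measConv]
  rw [integral_integral_swap (integrable_comp_sub_prod hφ)]
  simp only [integral_sub_right_eq_self φ, integral_const]

end

theorem integrable_one_add_norm_sq_mul_measConv {ψ : E → ℝ}
    (hμ : Integrable (fun z ↦ ‖z‖ ^ 2) μ) (hψ : Continuous ψ)
    (hψ_moment : Integrable (fun w ↦ (1 + ‖w‖ ^ 2) * ψ w) ν) :
    Integrable (fun x ↦ (1 + ‖x‖ ^ 2) * measConv μ ψ x) ν := by
  have hprod : Integrable
      (fun p : E × E ↦ (1 + ‖p.2‖ ^ 2) * ((1 + ‖p.1 - p.2‖ ^ 2) * ψ (p.1 - p.2))) (ν.prod μ) :=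
    ((integrable_const 1).add hμ).convolution_integrand (ContinuousLinearMap.mul ℝ ℝ) hψ_moment
  have hweighted : Integrable (fun p : E × E ↦ (1 + ‖p.1‖ ^ 2) * ψ (p.1 - p.2)) (ν.prod μ) := by
    refine (hprod.norm.const_mul 2).mono' (by fun_prop) (.of_forall fun p ↦ ?_)
    simp only [norm_mul, norm_of_nonneg (add_nonneg zero_le_one (sq_nonneg ‖_‖)), ← mul_assoc]
    gcongr
    linarith [one_add_norm_sq_le_two_mul p.1 p.2]
  simpa only [measConv, ← integral_const_mul] using hweighted.integral_prod_left

end MeasConvFubini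

section Gaussian

variable {d : ℕ}

theorem gaussD_pos {t : ℝ} (ht : 0 < t) (w : EuclideanSpace ℝ (Fin d)) : 0 < gaussD d t w := by
  unfold gaussD
  positivity

theorem contDiff_gaussD (d : ℕ) (t : ℝ) {n : WithTop ℕ∞} : ContDiff ℝ n (gaussD d t) :=
  contDiff_const.mul ((contDiff_norm_sq ℝ).neg.div_const (2 * t)).exp

theorem continuous_gaussD (d : ℕ) (t : ℝ) : Continuous (gaussD d t) :=
  (contDiff_gaussD d t (n := 0)).continuous

theorem integral_gaussD {t : ℝ} (ht : 0 < t) : ∫ w, gaussD d t w = 1 := by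
  have hkernel (w : EuclideanSpace ℝ (Fin d)) :
      gaussD d t w = (2 * π * t) ^ (-(d : ℝ) / 2) * exp (-(1 / (2 * t)) * ‖w‖ ^ 2) := by
    rw [gaussD]
    ring_nf
  have hwidth : π / (1 / (2 * t)) = 2 * π * t := by field_simp
  simp only [hkernel, integral_const_mul]
  rw [GaussianFourier.integral_rexp_neg_mul_sq_norm (by positivity), hwidth,
    finrank_euclideanSpace_fin, ← rpow_add (by positivity), neg_div, neg_add_cancel, rpow_zero]

theorem integrable_gaussD {t : ℝ} (ht : 0 < t) : Integrable (gaussD d t) :=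
  .of_integral_ne_zero <| by simp only [integral_gaussD ht, ne_eq, one_ne_zero, not_false_eq_true]

theorem gaussD_le_gaussD_zero {t : ℝ} (ht : 0 < t) (w : EuclideanSpace ℝ (Fin d)) :
    gaussD d t w ≤ gaussD d t 0 := by
  have hexp : -‖w‖ ^ 2 / (2 * t) ≤ -‖(0 : EuclideanSpace ℝ (Fin d))‖ ^ 2 / (2 * t) := by
    gcongr
    simp only [norm_zero, norm_nonneg]
  unfold gaussD
  gcongr

theorem gaussD_isBigO_one {t : ℝ} (ht : 0 < t) : gaussD d t =O[⊤] fun _ ↦ (1 : ℝ) :=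
  isBigO_top.2 ⟨gaussD d t 0, fun w ↦ by
    simpa only [norm_of_nonneg (gaussD_pos ht w).le, norm_one, mul_one]
      using gaussD_le_gaussD_zero ht w⟩

theorem gaussD_eq_mul_exp_mul_gaussD {s t : ℝ} (hs : 0 < s) (ht : 0 < t)
    (w : EuclideanSpace ℝ (Fin d)) :
    gaussD d s w =
      (t / s) ^ ((d : ℝ) / 2) * exp (-(‖w‖ ^ 2 / 2 * (1 / s - 1 / t))) * gaussD d t w := by
  have hscale : 2 * π * t = t / s * (2 * π * s) := by field_simp
  have hprefactor : (2 * π * s) ^ (-(d : ℝ) / 2) =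
      (t / s) ^ ((d : ℝ) / 2) * (2 * π * t) ^ (-(d : ℝ) / 2) := by
    rw [hscale, mul_rpow (x := t / s) (by positivity) (by positivity), ← mul_assoc,
      ← rpow_add (by positivity), neg_div, add_neg_cancel, rpow_zero, one_mul]
  have hexp : exp (-‖w‖ ^ 2 / (2 * s)) =
      exp (-(‖w‖ ^ 2 / 2 * (1 / s - 1 / t))) * exp (-‖w‖ ^ 2 / (2 * t)) := by
    rw [← exp_add]
    ring_nf
  rw [gaussD, gaussD, hprefactor, hexp]
  ring

theorem gaussD_le_of_le {s t : ℝ} (hs : 0 < s) (hst : s ≤ t) (w : EuclideanSpace ℝ (Fin d)) :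
    gaussD d s w ≤ (t / s) ^ ((d : ℝ) / 2) * gaussD d t w := by
  have ht : 0 < t := hs.trans_le hst
  have hinv : 0 ≤ 1 / s - 1 / t := sub_nonneg.2 (one_div_le_one_div_of_le hs hst)
  have := (gaussD_pos ht w).le
  rw [gaussD_eq_mul_exp_mul_gaussD hs ht]
  gcongr
  exact mul_le_of_le_one_right (by positivity) (exp_le_one_iff.2 (neg_nonpos.2 (by positivity)))

theorem one_add_norm_sq_mul_gaussD_le {t : ℝ} (ht : 0 < t) (w : EuclideanSpace ℝ (Fin d)) :
    (1 + ‖w‖ ^ 2) * gaussD d t w ≤ (1 + 4 * t) * 2 ^ ((d : ℝ) / 2) * gaussD d (2 * t) w := by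
  have hratio : 2 * t / t = 2 := by field_simp
  have hexponent : ‖w‖ ^ 2 / 2 * (1 / t - 1 / (2 * t)) = ‖w‖ ^ 2 / (4 * t) := by
    field_simp
    norm_num
  have := (gaussD_pos (show 0 < 2 * t by positivity) w).le
  calc (1 + ‖w‖ ^ 2) * gaussD d t w
      = (1 + ‖w‖ ^ 2) * exp (-(‖w‖ ^ 2 / (4 * t))) * 2 ^ ((d : ℝ) / 2) * gaussD d (2 * t) w := by
        rw [gaussD_eq_mul_exp_mul_gaussD ht (show 0 < 2 * t by positivity), hratio, hexponent]
        ring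
    _ ≤ (1 + 4 * t) * 2 ^ ((d : ℝ) / 2) * gaussD d (2 * t) w := by
        gcongr
        exact one_add_mul_exp_neg_div_le (by positivity) (by positivity)

theorem exists_one_add_norm_sq_mul_gaussD_le (d : ℕ) {y : ℝ} (hy : 0 < y) :
    ∃ C, ∀ t ∈ Icc (y / 2) (2 * y), ∀ w : EuclideanSpace ℝ (Fin d),
      (1 + ‖w‖ ^ 2) * gaussD d t w ≤ C * gaussD d (4 * y) w := by
  refine ⟨(1 + 4 * (2 * y)) * 2 ^ ((d : ℝ) / 2) * (4 * y / y) ^ ((d : ℝ) / 2),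
    fun t ⟨hyt, hty⟩ w ↦ ?_⟩
  have ht : 0 < t := by linarith
  have := (gaussD_pos (d := d) (show 0 < 4 * y by positivity) w).le
  calc (1 + ‖w‖ ^ 2) * gaussD d t w
      ≤ (1 + 4 * t) * 2 ^ ((d : ℝ) / 2) * gaussD d (2 * t) w := one_add_norm_sq_mul_gaussD_le ht w
    _ ≤ (1 + 4 * t) * 2 ^ ((d : ℝ) / 2) *
          ((4 * y / (2 * t)) ^ ((d : ℝ) / 2) * gaussD d (4 * y) w) := by
        gcongr
        exact gaussD_le_of_le (by positivity) (by linarith) w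
    _ ≤ (1 + 4 * (2 * y)) * 2 ^ ((d : ℝ) / 2) *
          ((4 * y / y) ^ ((d : ℝ) / 2) * gaussD d (4 * y) w) := by
        gcongr
        linarith
    _ = _ := by ring

theorem one_add_norm_sq_mul_gaussD_isBigO {t : ℝ} (ht : 0 < t) :
    (fun w ↦ (1 + ‖w‖ ^ 2) * gaussD d t w) =O[⊤] gaussD d (4 * t) := by
  obtain ⟨C, hC⟩ := exists_one_add_norm_sq_mul_gaussD_le d ht
  refine isBigO_top.2 ⟨C, fun w ↦ ?_⟩
  have hpos := gaussD_pos ht w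
  rw [norm_of_nonneg (by positivity), norm_of_nonneg (gaussD_pos (by positivity) w).le]
  exact hC t ⟨by linarith, by linarith⟩ w

theorem integrable_one_add_norm_sq_mul_gaussD {t : ℝ} (ht : 0 < t) :
    Integrable fun w : EuclideanSpace ℝ (Fin d) ↦ (1 + ‖w‖ ^ 2) * gaussD d t w := by
  have hcont : Continuous fun w : EuclideanSpace ℝ (Fin d) ↦ (1 + ‖w‖ ^ 2) * gaussD d t w :=
    (continuous_const.add (continuous_norm.pow 2)).mul (continuous_gaussD d t)
  exact (one_add_norm_sq_mul_gaussD_isBigO ht).integrable hcont.aestronglyMeasurable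
    (integrable_gaussD (by positivity))

/-- The partial derivative `∂ᵢ n_t` of the Gaussian density. -/
noncomputable def gaussPartial (i : Fin d) (t : ℝ) (w : EuclideanSpace ℝ (Fin d)) : ℝ :=
  -(w i / t) * gaussD d t w

/-- The pure second partial derivative `∂ᵢ² n_t` of the Gaussian density. -/
noncomputable def gaussSecondPartial (i : Fin d) (t : ℝ) (w : EuclideanSpace ℝ (Fin d)) : ℝ :=
  ((w i / t) ^ 2 - 1 / t) * gaussD d t w

theorem contDiff_gaussPartial (i : Fin d) (t : ℝ) {n : WithTop ℕ∞} :
    ContDiff ℝ n (gaussPartial i t) :=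
  ((EuclideanSpace.proj (𝕜 := ℝ) i).contDiff.div_const t).neg.mul (contDiff_gaussD d t)

theorem continuous_gaussSecondPartial (i : Fin d) (t : ℝ) :
    Continuous (gaussSecondPartial i t) := by
  have := continuous_gaussD d t
  unfold gaussSecondPartial
  fun_prop

theorem hasFDerivAt_gaussD (t : ℝ) (w : EuclideanSpace ℝ (Fin d)) :
    HasFDerivAt (gaussD d t) (-(gaussD d t w / t) • innerSL ℝ w) w := by
  have hexponent : HasFDerivAt (fun w : EuclideanSpace ℝ (Fin d) ↦ -‖w‖ ^ 2 / (2 * t))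
      ((2 * t)⁻¹ • -(2 • innerSL ℝ w : EuclideanSpace ℝ (Fin d) →L[ℝ] ℝ)) w :=
    (hasStrictFDerivAt_norm_sq w).hasFDerivAt.neg.mul_const (2 * t)⁻¹
  refine (hexponent.exp.const_mul ((2 * π * t) ^ (-(d : ℝ) / 2))).congr_fderiv ?_
  ext v
  simp only [neg_apply, smul_apply, innerSL_apply_apply, smul_eq_mul, gaussD, div_eq_mul_inv,
    mul_inv_rev, nsmul_eq_mul, Nat.cast_ofNat]
  ring

theorem hasFDerivAt_gaussPartial (i : Fin d) (t : ℝ) (w : EuclideanSpace ℝ (Fin d)) :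
    HasFDerivAt (gaussPartial i t)
      (-(w i / t) • -(gaussD d t w / t) • innerSL ℝ w -
        (gaussD d t w / t) • EuclideanSpace.proj (𝕜 := ℝ) i) w := by
  have hcoord : HasFDerivAt (fun w : EuclideanSpace ℝ (Fin d) ↦ -(w i / t))
      (-(t⁻¹ • EuclideanSpace.proj (𝕜 := ℝ) i)) w :=
    ((EuclideanSpace.proj (𝕜 := ℝ) i).hasFDerivAt.mul_const t⁻¹).neg
  refine (hcoord.mul (hasFDerivAt_gaussD t w)).congr_fderiv ?_
  rw [smul_neg, smul_smul (gaussD d t w), sub_eq_add_neg, div_eq_mul_inv (gaussD d t w)]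

theorem fderiv_gaussD_single (i : Fin d) (t : ℝ) (w : EuclideanSpace ℝ (Fin d)) :
    fderiv ℝ (gaussD d t) w (EuclideanSpace.single i 1) = gaussPartial i t w := by
  simp only [(hasFDerivAt_gaussD t w).fderiv, gaussPartial, smul_apply, innerSL_apply_apply,
    EuclideanSpace.inner_single_right, smul_eq_mul, one_mul, conj_trivial]
  ring

theorem fderiv_gaussPartial_single (i : Fin d) (t : ℝ) (w : EuclideanSpace ℝ (Fin d)) :
    fderiv ℝ (gaussPartial i t) w (EuclideanSpace.single i 1) = gaussSecondPartial i t w := by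
  simp only [(hasFDerivAt_gaussPartial i t w).fderiv, gaussSecondPartial, sub_apply, smul_apply,
    innerSL_apply_apply, EuclideanSpace.inner_single_right, PiLp.proj_apply,
    PiLp.single_eq_same, smul_eq_mul, one_mul, conj_trivial]
  ring

theorem sum_gaussSecondPartial (t : ℝ) (w : EuclideanSpace ℝ (Fin d)) :
    ∑ i, gaussSecondPartial i t w = (‖w‖ ^ 2 / t ^ 2 - d / t) * gaussD d t w := by
  simp only [gaussSecondPartial, ← Finset.sum_mul, Finset.sum_sub_distrib, div_pow,
    ← Finset.sum_div, EuclideanSpace.real_norm_sq_eq, Finset.sum_const, Finset.card_univ,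
    Fintype.card_fin, nsmul_eq_mul, mul_one]

theorem hasDerivAt_gaussD {t : ℝ} (ht : 0 < t) (w : EuclideanSpace ℝ (Fin d)) :
    HasDerivAt (fun s ↦ gaussD d s w) (1 / 2 * ∑ i, gaussSecondPartial i t w) t := by
  have hprefactor := ((hasDerivAt_id t).const_mul (2 * π)).rpow_const (p := -(d : ℝ) / 2)
    (.inl (by simp only [id]; positivity))
  have hexponent := ((hasDerivAt_inv ht.ne').const_mul (-‖w‖ ^ 2 / 2)).exp
  have hfactor (s : ℝ) : gaussD d s w =
      (2 * π * s) ^ (-(d : ℝ) / 2) * exp (-‖w‖ ^ 2 / 2 * s⁻¹) := by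
    rw [gaussD]
    ring_nf
  simp only [hfactor]
  refine (hprefactor.mul hexponent).congr_deriv ?_
  rw [sum_gaussSecondPartial, hfactor, rpow_sub_one (by simp only [id]; positivity)]
  simp only [id]
  field_simp
  ring

theorem norm_fderiv_gaussD_le {t : ℝ} (ht : 0 < t) (w : EuclideanSpace ℝ (Fin d)) :
    ‖fderiv ℝ (gaussD d t) w‖ ≤ 1 / t * ((1 + ‖w‖ ^ 2) * gaussD d t w) := by
  have := gaussD_pos ht w
  have hw : ‖w‖ ≤ 1 + ‖w‖ ^ 2 := by nlinarith [sq_nonneg (‖w‖ - 1), sq_nonneg ‖w‖]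
  rw [(hasFDerivAt_gaussD t w).fderiv, norm_smul, innerSL_apply_norm, norm_neg,
    norm_of_nonneg (by positivity)]
  calc gaussD d t w / t * ‖w‖ ≤ gaussD d t w / t * (1 + ‖w‖ ^ 2) := by gcongr
    _ = 1 / t * ((1 + ‖w‖ ^ 2) * gaussD d t w) := by ring

theorem norm_fderiv_gaussPartial_le (i : Fin d) {t : ℝ} (ht : 0 < t)
    (w : EuclideanSpace ℝ (Fin d)) :
    ‖fderiv ℝ (gaussPartial i t) w‖ ≤ (1 / t ^ 2 + 1 / t) * ((1 + ‖w‖ ^ 2) * gaussD d t w) := by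
  have := gaussD_pos ht w
  have hproj : ‖(EuclideanSpace.proj i : EuclideanSpace ℝ (Fin d) →L[ℝ] ℝ)‖ ≤ 1 :=
    ContinuousLinearMap.opNorm_le_bound _ zero_le_one fun v ↦ by
      simpa only [one_mul, PiLp.proj_apply] using PiLp.norm_apply_le v i
  have hradial : ‖-(w i / t) • -(gaussD d t w / t) • innerSL ℝ w‖ ≤
      ‖w‖ / t * (gaussD d t w / t * ‖w‖) := by
    rw [norm_smul, norm_smul, innerSL_apply_norm, norm_neg, norm_neg, norm_div, norm_div,
      norm_of_nonneg ht.le, norm_of_nonneg this.le]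
    gcongr
    exact PiLp.norm_apply_le w i
  have haxial : ‖(gaussD d t w / t) • (EuclideanSpace.proj i : EuclideanSpace ℝ (Fin d) →L[ℝ] ℝ)‖ ≤
      gaussD d t w / t := by
    rw [norm_smul, norm_of_nonneg (by positivity)]
    exact mul_le_of_le_one_right (by positivity) hproj
  rw [(hasFDerivAt_gaussPartial i t w).fderiv]
  calc _ ≤ ‖w‖ / t * (gaussD d t w / t * ‖w‖) + gaussD d t w / t :=
        (norm_sub_le _ _).trans (add_le_add hradial haxial)
    _ = (1 / t ^ 2 * ‖w‖ ^ 2 + 1 / t) * gaussD d t w := by ring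
    _ ≤ (1 / t ^ 2 * (1 + ‖w‖ ^ 2) + 1 / t * (1 + ‖w‖ ^ 2)) * gaussD d t w := by
        gcongr
        · linarith
        · exact le_mul_of_one_le_right (by positivity) (le_add_of_nonneg_right (by positivity))
    _ = _ := by ring

theorem isBigO_gaussD_of_norm_le {F : Type*} [NormedAddCommGroup F]
    {φ : EuclideanSpace ℝ (Fin d) → F} {C t : ℝ} (ht : 0 < t)
    (hφ : ∀ w, ‖φ w‖ ≤ C * ((1 + ‖w‖ ^ 2) * gaussD d t w)) : φ =O[⊤] gaussD d (4 * t) := by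
  refine (isBigO_top.2 ⟨C, fun w ↦ ?_⟩ : φ =O[⊤] fun w ↦ (1 + ‖w‖ ^ 2) * gaussD d t w).trans
    (one_add_norm_sq_mul_gaussD_isBigO ht)
  have := gaussD_pos ht w
  simpa only [norm_of_nonneg (show 0 ≤ (1 + ‖w‖ ^ 2) * gaussD d t w by positivity)] using hφ w

theorem gaussD_isBigO {t : ℝ} (ht : 0 < t) : gaussD d t =O[⊤] gaussD d (4 * t) :=
  isBigO_gaussD_of_norm_le (C := 1) ht fun w ↦ by
    have := gaussD_pos ht w
    rw [norm_of_nonneg this.le, one_mul]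
    exact le_mul_of_one_le_left this.le (le_add_of_nonneg_right (by positivity))

theorem fderiv_gaussD_isBigO {t : ℝ} (ht : 0 < t) :
    fderiv ℝ (gaussD d t) =O[⊤] gaussD d (4 * t) :=
  isBigO_gaussD_of_norm_le ht (norm_fderiv_gaussD_le ht)

theorem fderiv_gaussPartial_isBigO (i : Fin d) {t : ℝ} (ht : 0 < t) :
    fderiv ℝ (gaussPartial i t) =O[⊤] gaussD d (4 * t) :=
  isBigO_gaussD_of_norm_le ht (norm_fderiv_gaussPartial_le i ht)

theorem gaussPartial_isBigO (i : Fin d) {t : ℝ} (ht : 0 < t) :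
    gaussPartial i t =O[⊤] gaussD d (4 * t) := by
  refine (isBigO_top.2 ⟨1, fun w ↦ ?_⟩).trans (fderiv_gaussD_isBigO ht)
  rw [← fderiv_gaussD_single, one_mul]
  exact norm_fderiv_single_le i w

theorem gaussSecondPartial_isBigO (i : Fin d) {t : ℝ} (ht : 0 < t) :
    gaussSecondPartial i t =O[⊤] gaussD d (4 * t) := by
  refine (isBigO_top.2 ⟨1, fun w ↦ ?_⟩).trans (fderiv_gaussPartial_isBigO i ht)
  rw [← fderiv_gaussPartial_single, one_mul]
  exact norm_fderiv_single_le i w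

theorem exists_norm_gaussSecondPartial_le (i : Fin d) {y : ℝ} (hy : 0 < y) :
    ∃ C, ∀ t ∈ Icc (y / 2) (2 * y), ∀ w,
      ‖gaussSecondPartial i t w‖ ≤ C * gaussD d (4 * y) w := by
  obtain ⟨C, hC⟩ := exists_one_add_norm_sq_mul_gaussD_le d hy
  refine ⟨(1 / (y / 2) ^ 2 + 1 / (y / 2)) * C, fun t ht w ↦ ?_⟩
  have hyt : y / 2 ≤ t := ht.1
  have ht_pos : 0 < t := by linarith
  have := (gaussD_pos ht_pos w).le
  rw [← fderiv_gaussPartial_single]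
  calc _ ≤ (1 / t ^ 2 + 1 / t) * ((1 + ‖w‖ ^ 2) * gaussD d t w) :=
        (norm_fderiv_single_le i w).trans (norm_fderiv_gaussPartial_le i ht_pos w)
    _ ≤ (1 / (y / 2) ^ 2 + 1 / (y / 2)) * (C * gaussD d (4 * y) w) := by
        refine mul_le_mul ?_ (hC t ht w) (by positivity) (by positivity)
        gcongr
    _ = _ := by ring

theorem sq_gaussPartial_div_gaussD (i : Fin d) {t : ℝ} (ht : 0 < t)
    (w : EuclideanSpace ℝ (Fin d)) :
    gaussPartial i t w ^ 2 / gaussD d t w = gaussSecondPartial i t w + 1 / t * gaussD d t w := by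
  have := (gaussD_pos ht w).ne'
  rw [gaussPartial, gaussSecondPartial]
  field_simp
  ring

theorem exp_neg_mul_gaussD_le {t : ℝ} (ht : 0 < t) (x z : EuclideanSpace ℝ (Fin d)) :
    exp (-(‖x‖ ^ 2 / t)) * gaussD d (t / 2) (0 - z) ≤ 2 ^ ((d : ℝ) / 2) * gaussD d t (x - z) := by
  have hnorm : ‖x - z‖ ^ 2 ≤ 2 * (‖x‖ ^ 2 + ‖z‖ ^ 2) := by
    nlinarith [norm_sub_le x z, norm_nonneg (x - z), sq_nonneg (‖x‖ - ‖z‖)]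
  have hratio : t / (t / 2) = 2 := by field_simp
  have hexp : exp (-(‖x‖ ^ 2 / t)) * (exp (-(‖z‖ ^ 2 / 2 * (1 / (t / 2) - 1 / t))) *
      exp (-‖z‖ ^ 2 / (2 * t))) ≤ exp (-‖x - z‖ ^ 2 / (2 * t)) := by
    rw [← exp_add, ← exp_add, exp_le_exp]
    field_simp
    linarith
  rw [zero_sub, gaussD_eq_mul_exp_mul_gaussD (half_pos ht) ht, norm_neg, hratio, gaussD, gaussD,
    norm_neg]
  calc _ = 2 ^ ((d : ℝ) / 2) * (2 * π * t) ^ (-(d : ℝ) / 2) *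
        (exp (-(‖x‖ ^ 2 / t)) * (exp (-(‖z‖ ^ 2 / 2 * (1 / (t / 2) - 1 / t))) *
          exp (-‖z‖ ^ 2 / (2 * t)))) := by ring
    _ ≤ 2 ^ ((d : ℝ) / 2) * (2 * π * t) ^ (-(d : ℝ) / 2) * exp (-‖x - z‖ ^ 2 / (2 * t)) := by
        gcongr
    _ = _ := by ring

end Gaussian

section SmoothedDensity

variable {d : ℕ} {μ : Measure (EuclideanSpace ℝ (Fin d))} [IsFiniteMeasure μ] {t y : ℝ}

theorem convG_pos [NeZero μ] (ht : 0 < t) (x : EuclideanSpace ℝ (Fin d)) : 0 < convG d μ t x :=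
  measConv_pos (continuous_gaussD d t) (gaussD_isBigO_one ht) (gaussD_pos ht) x

theorem differentiable_convG (ht : 0 < t) : Differentiable ℝ (convG d μ t) :=
  fun x ↦ (hasFDerivAt_measConv (contDiff_gaussD d t) (gaussD_isBigO_one ht)
    ((fderiv_gaussD_isBigO ht).trans (gaussD_isBigO_one (by positivity))) x).differentiableAt

theorem continuous_neg_log_convG_sub_one [NeZero μ] (ht : 0 < t) :
    Continuous fun x ↦ -log (convG d μ t x) - 1 :=
  ((differentiable_convG ht).continuous.log fun x ↦ (convG_pos ht x).ne').neg.sub continuous_const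

theorem fderiv_convG_single (ht : 0 < t) (i : Fin d) (x : EuclideanSpace ℝ (Fin d)) :
    fderiv ℝ (convG d μ t) x (EuclideanSpace.single i 1) = measConv μ (gaussPartial i t) x := by
  have h4t : 0 < 4 * t := by positivity
  have hpartial := fderiv_measConv_apply (μ := μ) (contDiff_gaussD d t) (gaussD_isBigO_one ht)
    ((fderiv_gaussD_isBigO ht).trans (gaussD_isBigO_one h4t)) x (EuclideanSpace.single i 1)
  simp only [fderiv_gaussD_single] at hpartial
  exact hpartial

theorem differentiable_measConv_gaussPartial (i : Fin d) (ht : 0 < t) :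
    Differentiable ℝ (measConv μ (gaussPartial i t)) := by
  have h4t : 0 < 4 * t := by positivity
  exact fun x ↦ (hasFDerivAt_measConv (contDiff_gaussPartial i t)
    ((gaussPartial_isBigO i ht).trans (gaussD_isBigO_one h4t))
    ((fderiv_gaussPartial_isBigO i ht).trans (gaussD_isBigO_one h4t)) x).differentiableAt

theorem fderiv_measConv_gaussPartial_single (i : Fin d) (ht : 0 < t)
    (x : EuclideanSpace ℝ (Fin d)) :
    fderiv ℝ (measConv μ (gaussPartial i t)) x (EuclideanSpace.single i 1) =
      measConv μ (gaussSecondPartial i t) x := by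
  have h4t : 0 < 4 * t := by positivity
  have hpartial := fderiv_measConv_apply (μ := μ) (contDiff_gaussPartial i t)
    ((gaussPartial_isBigO i ht).trans (gaussD_isBigO_one h4t))
    ((fderiv_gaussPartial_isBigO i ht).trans (gaussD_isBigO_one h4t)) x (EuclideanSpace.single i 1)
  simp only [fderiv_gaussPartial_single] at hpartial
  exact hpartial

theorem measConv_isBigO_convG {φ : EuclideanSpace ℝ (Fin d) → ℝ} (ht : 0 < t)
    (hφ : φ =O[⊤] gaussD d t) : measConv μ φ =O[⊤] convG d μ t :=
  isBigO_measConv (continuous_gaussD d t) (gaussD_isBigO_one ht) (fun w ↦ (gaussD_pos ht w).le) hφ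

theorem continuous_measConv_gaussSecondPartial (i : Fin d) (ht : 0 < t) :
    Continuous (measConv μ (gaussSecondPartial i t)) :=
  continuous_measConv (continuous_gaussSecondPartial i t)
    ((gaussSecondPartial_isBigO i ht).trans (gaussD_isBigO_one (by positivity)))

theorem continuous_half_sum_gaussSecondPartial (t : ℝ) :
    Continuous fun w ↦ 1 / 2 * ∑ i : Fin d, gaussSecondPartial i t w :=
  continuous_const.mul <| continuous_finsetSum _ fun i _ ↦ continuous_gaussSecondPartial i t

theorem exists_norm_half_sum_gaussSecondPartial_le (d : ℕ) (hy : 0 < y) :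
    ∃ C, ∀ t ∈ Icc (y / 2) (2 * y), ∀ w,
      ‖1 / 2 * ∑ i : Fin d, gaussSecondPartial i t w‖ ≤ C * gaussD d (4 * y) w := by
  choose C hC using fun i : Fin d ↦ exists_norm_gaussSecondPartial_le i hy
  refine ⟨1 / 2 * ∑ i, C i, fun t ht w ↦ ?_⟩
  rw [norm_mul, norm_of_nonneg one_half_pos.le, mul_assoc, Finset.sum_mul]
  gcongr
  exact norm_sum_le_of_le _ fun i _ ↦ hC i t ht w

theorem measConv_half_sum_gaussSecondPartial (ht : 0 < t) (x : EuclideanSpace ℝ (Fin d)) :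
    measConv μ (fun w ↦ 1 / 2 * ∑ i, gaussSecondPartial i t w) x =
      1 / 2 * ∑ i, measConv μ (gaussSecondPartial i t) x := by
  simp only [measConv]
  rw [integral_const_mul, integral_finsetSum]
  exact fun i _ ↦ integrable_comp_const_sub (continuous_gaussSecondPartial i t)
    ((gaussSecondPartial_isBigO i ht).trans (gaussD_isBigO_one (by positivity))) x

theorem exists_norm_half_sum_measConv_gaussSecondPartial_le (hy : 0 < y) :
    ∃ C, ∀ t ∈ Icc (y / 2) (2 * y), ∀ x,
      ‖1 / 2 * ∑ i, measConv μ (gaussSecondPartial i t) x‖ ≤ C * convG d μ (4 * y) x := by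
  obtain ⟨C, hC⟩ := exists_norm_half_sum_gaussSecondPartial_le d hy
  refine ⟨C, fun t ht x ↦ ?_⟩
  rw [← measConv_half_sum_gaussSecondPartial (by linarith [ht.1])]
  exact norm_measConv_le (continuous_gaussD d (4 * y)) (gaussD_isBigO_one (by positivity))
    (hC t ht) x

theorem hasDerivAt_convG (hy : 0 < y) (x : EuclideanSpace ℝ (Fin d)) :
    HasDerivAt (fun t ↦ convG d μ t x) (1 / 2 * ∑ i, measConv μ (gaussSecondPartial i y) x) y := by
  obtain ⟨C, hC⟩ := exists_norm_half_sum_gaussSecondPartial_le d hy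
  have hgauss_int {t : ℝ} (ht : 0 < t) : Integrable (fun z ↦ gaussD d t (x - z)) μ :=
    integrable_comp_const_sub (continuous_gaussD d t) (gaussD_isBigO_one ht) x
  have hnhds : Icc (y / 2) (2 * y) ∈ nhds y := Icc_mem_nhds (half_lt_self hy) (by linarith)
  rw [← measConv_half_sum_gaussSecondPartial hy]
  exact (hasDerivAt_integral_of_dominated_loc_of_deriv_le hnhds
    ((eventually_gt_nhds hy).mono fun t ht ↦ (hgauss_int ht).aestronglyMeasurable)
    (hgauss_int hy) ((continuous_half_sum_gaussSecondPartial y).comp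
      (continuous_const.sub continuous_id)).aestronglyMeasurable
    (.of_forall fun z t ht ↦ hC t ht (x - z))
    ((hgauss_int (by positivity : 0 < 4 * y)).const_mul C)
    (.of_forall fun z t ht ↦ hasDerivAt_gaussD (by linarith [ht.1]) (x - z))).2

theorem convG_le_of_le {s : ℝ} (hs : 0 < s) (hst : s ≤ t) (x : EuclideanSpace ℝ (Fin d)) :
    convG d μ s x ≤ (t / s) ^ ((d : ℝ) / 2) * convG d μ t x := by
  have ht : 0 < t := hs.trans_le hst
  rw [convG, convG, ← integral_const_mul]
  exact integral_mono (integrable_comp_const_sub (continuous_gaussD d s) (gaussD_isBigO_one hs) x)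
    ((integrable_comp_const_sub (continuous_gaussD d t) (gaussD_isBigO_one ht) x).const_mul _)
    fun z ↦ gaussD_le_of_le hs hst (x - z)

theorem convG_le_mul_gaussD_zero (ht : 0 < t) (x : EuclideanSpace ℝ (Fin d)) :
    convG d μ t x ≤ μ.real univ * gaussD d t 0 := by
  rw [← smul_eq_mul, ← integral_const, convG]
  exact integral_mono (integrable_comp_const_sub (continuous_gaussD d t) (gaussD_isBigO_one ht) x)
    (integrable_const _) fun z ↦ gaussD_le_gaussD_zero ht (x - z)

theorem exp_neg_mul_convG_zero_le (ht : 0 < t) (x : EuclideanSpace ℝ (Fin d)) :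
    exp (-(‖x‖ ^ 2 / t)) * convG d μ (t / 2) 0 ≤ 2 ^ ((d : ℝ) / 2) * convG d μ t x := by
  rw [convG, convG, ← integral_const_mul, ← integral_const_mul]
  exact integral_mono
    ((integrable_comp_const_sub (continuous_gaussD d (t / 2))
      (gaussD_isBigO_one (half_pos ht)) 0).const_mul _)
    ((integrable_comp_const_sub (continuous_gaussD d t) (gaussD_isBigO_one ht) x).const_mul _)
    fun z ↦ exp_neg_mul_gaussD_le ht x z

theorem integrable_convG (ht : 0 < t) : Integrable (convG d μ t) :=
  integrable_measConv (integrable_gaussD ht)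

theorem integral_convG (ht : 0 < t) : ∫ x, convG d μ t x = μ.real univ := by
  have hmass := integral_measConv (μ := μ) (integrable_gaussD (d := d) ht)
  rwa [integral_gaussD ht, smul_eq_mul, mul_one] at hmass

theorem integrable_one_add_norm_sq_mul_convG (hμ : Integrable (fun z ↦ ‖z‖ ^ 2) μ) (ht : 0 < t) :
    Integrable fun x ↦ (1 + ‖x‖ ^ 2) * convG d μ t x :=
  integrable_one_add_norm_sq_mul_measConv hμ (continuous_gaussD d t)
    (integrable_one_add_norm_sq_mul_gaussD ht)

theorem integrable_sq_fderiv_convG_div_convG [NeZero μ] (ht : 0 < t) (i : Fin d) :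
    Integrable fun x ↦
      fderiv ℝ (convG d μ t) x (EuclideanSpace.single i 1) ^ 2 / convG d μ t x := by
  have h4t : 0 < 4 * t := by positivity
  have hratio_bigO : (fun w ↦ gaussPartial i t w ^ 2 / gaussD d t w) =O[⊤] gaussD d (4 * t) := by
    simp only [sq_gaussPartial_div_gaussD i ht]
    exact (gaussSecondPartial_isBigO i ht).add ((gaussD_isBigO ht).const_mul_left _)
  have hpartial_cont : Continuous (gaussPartial i t) :=
    (contDiff_gaussPartial i t (n := 0)).continuous
  have hpartial_bdd := (gaussPartial_isBigO i ht).trans (gaussD_isBigO_one h4t)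
  have hratio_cont : Continuous fun w ↦ gaussPartial i t w ^ 2 / gaussD d t w :=
    (hpartial_cont.pow 2).div (continuous_gaussD d t) fun w ↦ (gaussD_pos ht w).ne'
  have hratio_int : Integrable fun w ↦ gaussPartial i t w ^ 2 / gaussD d t w :=
    hratio_bigO.integrable hratio_cont.aestronglyMeasurable (integrable_gaussD h4t)
  simp only [fderiv_convG_single ht]
  refine (integrable_measConv (μ := μ) hratio_int).mono' ?_ (.of_forall fun x ↦ ?_)
  · exact (((continuous_measConv hpartial_cont hpartial_bdd).pow 2).div
      (differentiable_convG ht).continuous fun x ↦ (convG_pos ht x).ne').aestronglyMeasurable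
  · rw [norm_of_nonneg (div_nonneg (sq_nonneg _) (convG_pos ht x).le)]
    exact sq_measConv_div_measConv_le hpartial_cont hpartial_bdd (continuous_gaussD d t)
      (gaussD_isBigO_one ht) (gaussD_pos ht) (hratio_bigO.trans (gaussD_isBigO_one h4t)) x

theorem integrable_fderiv_convG (ht : 0 < t) (i : Fin d) :
    Integrable fun x ↦ fderiv ℝ (convG d μ t) x (EuclideanSpace.single i 1) := by
  have h4t : 0 < 4 * t := by positivity
  have hpartial_int : Integrable (gaussPartial i t) :=
    (gaussPartial_isBigO i ht).integrable
      (contDiff_gaussPartial i t (n := 0)).continuous.aestronglyMeasurable (integrable_gaussD h4t)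
  simpa only [fderiv_convG_single ht] using integrable_measConv (μ := μ) hpartial_int

theorem exists_convG_le (μ : Measure (EuclideanSpace ℝ (Fin d))) [IsFiniteMeasure μ]
    (hy : 0 < y) : ∃ C, ∀ t ∈ Icc (y / 2) (2 * y), ∀ x, convG d μ t x ≤ C := by
  refine ⟨(2 * y / (y / 2)) ^ ((d : ℝ) / 2) * (μ.real univ * gaussD d (2 * y) 0),
    fun t ⟨hyt, hty⟩ x ↦ ?_⟩
  have ht : 0 < t := by linarith
  have := gaussD_pos (d := d) (show 0 < 2 * y by positivity) 0
  calc convG d μ t x ≤ (2 * y / t) ^ ((d : ℝ) / 2) * convG d μ (2 * y) x :=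
        convG_le_of_le ht hty x
    _ ≤ (2 * y / t) ^ ((d : ℝ) / 2) * (μ.real univ * gaussD d (2 * y) 0) := by
        gcongr
        exact convG_le_mul_gaussD_zero (by positivity) x
    _ ≤ _ := by gcongr

theorem exists_mul_exp_neg_le_convG (μ : Measure (EuclideanSpace ℝ (Fin d))) [IsFiniteMeasure μ]
    [NeZero μ] (hy : 0 < y) :
    ∃ c > 0, ∀ t ∈ Icc (y / 2) (2 * y), ∀ x, c * exp (-(2 / y * ‖x‖ ^ 2)) ≤ convG d μ t x := by
  have hpos := convG_pos (μ := μ) (show 0 < y / 2 / 2 by positivity) 0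
  refine ⟨convG d μ (y / 2 / 2) 0 / (2 ^ ((d : ℝ) / 2) * (2 * y / (y / 2)) ^ ((d : ℝ) / 2)),
    by positivity, fun t ⟨hyt, hty⟩ x ↦ ?_⟩
  have ht : 0 < t := by linarith
  have := convG_pos (μ := μ) ht x
  have hexponent : 2 / y * ‖x‖ ^ 2 = ‖x‖ ^ 2 / (y / 2) := by field_simp
  rw [div_mul_eq_mul_div, div_le_iff₀' (by positivity), hexponent]
  calc convG d μ (y / 2 / 2) 0 * exp (-(‖x‖ ^ 2 / (y / 2)))
      = exp (-(‖x‖ ^ 2 / (y / 2))) * convG d μ (y / 2 / 2) 0 := mul_comm _ _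
    _ ≤ 2 ^ ((d : ℝ) / 2) * convG d μ (y / 2) x := exp_neg_mul_convG_zero_le (by positivity) x
    _ ≤ 2 ^ ((d : ℝ) / 2) * ((t / (y / 2)) ^ ((d : ℝ) / 2) * convG d μ t x) := by
        gcongr
        exact convG_le_of_le (by positivity) hyt x
    _ ≤ 2 ^ ((d : ℝ) / 2) * ((2 * y / (y / 2)) ^ ((d : ℝ) / 2) * convG d μ t x) := by gcongr
    _ = _ := by ring

theorem exists_norm_neg_log_convG_sub_one_le (μ : Measure (EuclideanSpace ℝ (Fin d)))
    [IsFiniteMeasure μ] [NeZero μ] (hy : 0 < y) :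
    ∃ A, ∀ t ∈ Icc (y / 2) (2 * y), ∀ x, ‖-log (convG d μ t x) - 1‖ ≤ A * (1 + ‖x‖ ^ 2) := by
  obtain ⟨C, hupper⟩ := exists_convG_le μ hy
  obtain ⟨c, hc, hlower⟩ := exists_mul_exp_neg_le_convG μ hy
  refine ⟨|log c| + |log C| + 2 / y + 1, fun t ht x ↦ ?_⟩
  have hlog := abs_log_le_of_mul_exp_le hc (by positivity : 0 ≤ 2 / y) (sq_nonneg ‖x‖)
    (hlower t ht x) (hupper t ht x)
  have htri : ‖-log (convG d μ t x) - 1‖ ≤ |log (convG d μ t x)| + 1 := by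
    simpa only [norm_neg, norm_one, norm_eq_abs] using norm_sub_le (-log (convG d μ t x)) 1
  linarith [sq_nonneg ‖x‖]

end SmoothedDensity

section DeBruijn

variable {d : ℕ}

/-- The Fisher information `∫ ‖∇f‖² / f` of a positive density `f` on `ℝ^d`, written as the sum of
the contributions of the coordinates. -/
noncomputable def fisherInformation (f : EuclideanSpace ℝ (Fin d) → ℝ) : ℝ :=
  ∑ i, ∫ x, fderiv ℝ f x (EuclideanSpace.single i 1) ^ 2 / f x

theorem sum_sq_integral_abs_fderiv_le_fisherInformation {f : EuclideanSpace ℝ (Fin d) → ℝ}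
    (hf_pos : ∀ x, 0 < f x) (hf_mass : ∫ x, f x = 1)
    (hf' : ∀ i, Integrable fun x ↦ fderiv ℝ f x (EuclideanSpace.single i 1))
    (hf'_sq : ∀ i, Integrable fun x ↦ fderiv ℝ f x (EuclideanSpace.single i 1) ^ 2 / f x) :
    ∑ i, (∫ x, |fderiv ℝ f x (EuclideanSpace.single i 1)|) ^ 2 ≤ fisherInformation f := by
  have hf : Integrable f := .of_integral_ne_zero (hf_mass.trans_ne one_ne_zero)
  refine Finset.sum_le_sum fun i _ ↦ ?_
  simpa only [hf_mass, mul_one] using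
    sq_integral_abs_le_integral_sq_div_mul_integral hf_pos (hf' i) hf (hf'_sq i)

variable {μ : Measure (EuclideanSpace ℝ (Fin d))} [IsFiniteMeasure μ] [NeZero μ] {y : ℝ}

theorem integrable_neg_log_convG_sub_one_mul (hμ : Integrable (fun z ↦ ‖z‖ ^ 2) μ) (hy : 0 < y)
    {g : EuclideanSpace ℝ (Fin d) → ℝ} (hg : Continuous g) (hg_bigO : g =O[⊤] convG d μ (4 * y)) :
    Integrable fun x ↦ (-log (convG d μ y x) - 1) * g x := by
  have h4y : 0 < 4 * y := by positivity
  obtain ⟨A, hA⟩ := exists_norm_neg_log_convG_sub_one_le μ hy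
  have hlog_bigO : (fun x ↦ -log (convG d μ y x) - 1) =O[⊤]
      fun x : EuclideanSpace ℝ (Fin d) ↦ 1 + ‖x‖ ^ 2 :=
    isBigO_top.2 ⟨A, fun x ↦ by
      simpa only [norm_of_nonneg (show 0 ≤ 1 + ‖x‖ ^ 2 by positivity)] using
        hA y ⟨half_le_self hy.le, le_mul_of_one_le_left hy.le one_le_two⟩ x⟩
  exact (hlog_bigO.mul hg_bigO).integrable
    ((continuous_neg_log_convG_sub_one hy).mul hg).aestronglyMeasurable
    (integrable_one_add_norm_sq_mul_convG hμ h4y)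

theorem integrable_negMulLog_convG (hμ : Integrable (fun z ↦ ‖z‖ ^ 2) μ) (hy : 0 < y) :
    Integrable fun x ↦ negMulLog (convG d μ y x) := by
  have hsplit (u : ℝ) : negMulLog u = (-log u - 1) * u + u := by
    rw [negMulLog]
    ring
  simp only [hsplit]
  exact (integrable_neg_log_convG_sub_one_mul hμ hy (differentiable_convG hy).continuous
    (measConv_isBigO_convG (by positivity) (gaussD_isBigO hy))).add (integrable_convG hy)

theorem hasDerivAt_negMulLog_convG (hy : 0 < y) (x : EuclideanSpace ℝ (Fin d)) :
    HasDerivAt (fun t ↦ negMulLog (convG d μ t x))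
      ((-log (convG d μ y x) - 1) * (1 / 2 * ∑ i, measConv μ (gaussSecondPartial i y) x)) y := by
  have hlog := hasDerivAt_negMulLog (convG_pos (μ := μ) hy x).ne'
  exact hlog.comp y (hasDerivAt_convG hy x)

theorem hasDerivAt_entG (hμ : Integrable (fun z ↦ ‖z‖ ^ 2) μ) (hy : 0 < y) :
    HasDerivAt (entG d μ) (∫ x, (-log (convG d μ y x) - 1) *
      (1 / 2 * ∑ i, measConv μ (gaussSecondPartial i y) x)) y := by
  obtain ⟨A, hA⟩ := exists_norm_neg_log_convG_sub_one_le μ hy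
  obtain ⟨C, hC⟩ := exists_norm_half_sum_measConv_gaussSecondPartial_le (μ := μ) hy
  have hnhds : Icc (y / 2) (2 * y) ∈ nhds y := Icc_mem_nhds (half_lt_self hy) (by linarith)
  have hbound (x : EuclideanSpace ℝ (Fin d)) (t : ℝ) (ht : t ∈ Icc (y / 2) (2 * y)) :
      ‖(-log (convG d μ t x) - 1) * (1 / 2 * ∑ i, measConv μ (gaussSecondPartial i t) x)‖ ≤
        A * C * ((1 + ‖x‖ ^ 2) * convG d μ (4 * y) x) := by
    rw [norm_mul, mul_mul_mul_comm]
    exact mul_le_mul (hA t ht x) (hC t ht x) (norm_nonneg _) ((norm_nonneg _).trans (hA t ht x))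
  have hcont : Continuous fun x ↦
      (-log (convG d μ y x) - 1) * (1 / 2 * ∑ i, measConv μ (gaussSecondPartial i y) x) :=
    (continuous_neg_log_convG_sub_one hy).mul <| continuous_const.mul <|
      continuous_finsetSum _ fun i _ ↦ continuous_measConv_gaussSecondPartial i hy
  exact (hasDerivAt_integral_of_dominated_loc_of_deriv_le hnhds
    ((eventually_gt_nhds hy).mono fun t ht ↦
      (integrable_negMulLog_convG hμ ht).aestronglyMeasurable)
    (integrable_negMulLog_convG hμ hy) hcont.aestronglyMeasurable (.of_forall hbound)
    ((integrable_one_add_norm_sq_mul_convG hμ (by positivity)).const_mul (A * C))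
    (.of_forall fun x t ht ↦ hasDerivAt_negMulLog_convG (by linarith [ht.1]) x)).2

theorem integrable_neg_log_convG_sub_one_mul_measConv (hμ : Integrable (fun z ↦ ‖z‖ ^ 2) μ)
    (hy : 0 < y) (i : Fin d) :
    Integrable fun x ↦ (-log (convG d μ y x) - 1) * measConv μ (gaussSecondPartial i y) x :=
  integrable_neg_log_convG_sub_one_mul hμ hy (continuous_measConv_gaussSecondPartial i hy)
    (measConv_isBigO_convG (by positivity) (gaussSecondPartial_isBigO i hy))

theorem integral_neg_log_convG_sub_one_mul_measConv
    (hμ : Integrable (fun z ↦ ‖z‖ ^ 2) μ) (hy : 0 < y) (i : Fin d) :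
    ∫ x, (-log (convG d μ y x) - 1) * measConv μ (gaussSecondPartial i y) x =
      ∫ x, fderiv ℝ (convG d μ y) x (EuclideanSpace.single i 1) ^ 2 / convG d μ y x := by
  have h4y : 0 < 4 * y := by positivity
  have hpartial := differentiable_measConv_gaussPartial (μ := μ) i hy
  have hparts := integral_neg_log_sub_one_mul_fderiv (ν := volume) (v := EuclideanSpace.single i 1)
    (convG_pos (μ := μ) hy) (differentiable_convG hy) hpartial
    (integrable_neg_log_convG_sub_one_mul hμ hy hpartial.continuous
      (measConv_isBigO_convG h4y (gaussPartial_isBigO i hy)))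
  simp only [fderiv_measConv_gaussPartial_single i hy, ← fderiv_convG_single hy, ← sq] at hparts
  exact hparts (integrable_neg_log_convG_sub_one_mul_measConv hμ hy i)
    (integrable_sq_fderiv_convG_div_convG hy i)

theorem hasDerivAt_entG_fisherInformation (hμ : Integrable (fun z ↦ ‖z‖ ^ 2) μ) (hy : 0 < y) :
    HasDerivAt (entG d μ) (1 / 2 * fisherInformation (convG d μ y)) y := by
  refine (hasDerivAt_entG hμ hy).congr_deriv ?_
  have hsum (x : EuclideanSpace ℝ (Fin d)) :
      (-log (convG d μ y x) - 1) * (1 / 2 * ∑ i, measConv μ (gaussSecondPartial i y) x) =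
        1 / 2 * ∑ i, (-log (convG d μ y x) - 1) * measConv μ (gaussSecondPartial i y) x := by
    rw [mul_left_comm, Finset.mul_sum]
  simp only [hsum]
  rw [integral_const_mul,
    integral_finsetSum _ fun i _ ↦ integrable_neg_log_convG_sub_one_mul_measConv hμ hy i]
  simp only [integral_neg_log_convG_sub_one_mul_measConv hμ hy, fisherInformation]

end DeBruijn

theorem statement13_general {d : ℕ} (μ : Measure (EuclideanSpace ℝ (Fin d)))
    [IsProbabilityMeasure μ] (hμ : Integrable (fun z ↦ ‖z‖ ^ 2) μ) (y : ℝ) (hy : 0 < y) :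
    ∃ D : ℝ, HasDerivAt (entG d μ) D y ∧
      1 / 2 * ∑ i : Fin d,
          (∫ x, |fderiv ℝ (convG d μ y) x (EuclideanSpace.single i 1)|) ^ 2 ≤ D := by
  have hmass : ∫ x, convG d μ y x = 1 := by rw [integral_convG hy, probReal_univ]
  refine ⟨1 / 2 * fisherInformation (convG d μ y), hasDerivAt_entG_fisherInformation hμ hy, ?_⟩
  gcongr
  exact sum_sq_integral_abs_fderiv_le_fisherInformation (convG_pos hy) hmass
    (integrable_fderiv_convG hy) (integrable_sq_fderiv_convG_div_convG hy)

theorem statement13 {d : ℕ} (μ : Measure (EuclideanSpace ℝ (Fin d)))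
    [IsProbabilityMeasure μ] (K : Set (EuclideanSpace ℝ (Fin d)))
    (hK : IsCompact K) (hμK : μ Kᶜ = 0) (y : ℝ) (hy : 0 < y) :
    ∃ D : ℝ, HasDerivWithinAt (entG d μ) D (Set.Ioi y) y ∧
      1 / 2 * ∑ i : Fin d,
          (∫ x, |fderiv ℝ (convG d μ y) x (EuclideanSpace.single i 1)|) ^ 2 ≤ D :=
  have hμ := integrable_of_isCompact_of_measure_compl_eq_zero (continuous_norm.pow 2) hK hμK
  (statement13_general μ hμ y hy).imp fun _ ↦ And.imp_left HasDerivAt.hasDerivWithinAt
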